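/- arXiv:1306.6367 — 2 statements merged into one kernel-verified Lean document; each statement's English description precedes it below -/
import Mathlib

section
/- Let n ≥ 2, let U ⊆ ℝ^{n+1} be open, let y_1,…,y_{n−1}, z : U → ℝ be smooth, and let F : U → ℝ^{2n+1} be the graph map. Then the 3-form α ∧ ω_0 vanishes on the image of dF at every point of U (i.e. (α∧ω_0)_{F(p)}(dF_p(u), dF_p(v), dF_p(w)) = 0 for all p ∈ U and u,v,w ∈ ℝ^{n+1}) if and only if equations (E0), (E1), (E2), (E3) hold at every point of U for all admissible indices. -/
open scoped BigOperators

/-- Partial derivative of `f` in the `i`-th coordinate direction. -/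
noncomputable def pd {m : ℕ} (i : Fin m) (f : (Fin m → ℝ) → ℝ) (p : Fin m → ℝ) : ℝ :=
  fderiv ℝ f p (Pi.single i 1)

/-- Index of the coordinate `x_a` (for `1 ≤ a ≤ n-1`) in `ℝ^{n+1}` with
coordinates `(x_1, …, x_n, y_n)`. -/
def xIdx {n : ℕ} (a : Fin (n - 1)) : Fin (n + 1) := Fin.castLE (by omega) a

/-- Index of the coordinate `x_n`. -/
def xnIdx (n : ℕ) : Fin (n + 1) := ⟨n - 1, by omega⟩

/-- Index of the coordinate `y_n`. -/
def ynIdx (n : ℕ) : Fin (n + 1) := ⟨n, by omega⟩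

/-- Equation (E0). -/
noncomputable def E0 {n : ℕ} (y : Fin (n - 1) → (Fin (n + 1) → ℝ) → ℝ)
    (z : (Fin (n + 1) → ℝ) → ℝ) (a b c : Fin (n - 1)) (p : Fin (n + 1) → ℝ) : ℝ :=
  (pd (xIdx a) z p - y a p) * (pd (xIdx c) (y b) p - pd (xIdx b) (y c) p)
    - (pd (xIdx b) z p - y b p) * (pd (xIdx c) (y a) p - pd (xIdx a) (y c) p)
    + (pd (xIdx c) z p - y c p) * (pd (xIdx b) (y a) p - pd (xIdx a) (y b) p)

/-- Equation (E1). -/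
noncomputable def E1 {n : ℕ} (y : Fin (n - 1) → (Fin (n + 1) → ℝ) → ℝ)
    (z : (Fin (n + 1) → ℝ) → ℝ) (a b : Fin (n - 1)) (p : Fin (n + 1) → ℝ) : ℝ :=
  (pd (xIdx a) z p - y a p) * pd (xnIdx n) (y b) p
    - (pd (xIdx b) z p - y b p) * pd (xnIdx n) (y a) p
    + (pd (xnIdx n) z p - p (ynIdx n)) * (pd (xIdx b) (y a) p - pd (xIdx a) (y b) p)

/-- Equation (E2). -/
noncomputable def E2 {n : ℕ} (y : Fin (n - 1) → (Fin (n + 1) → ℝ) → ℝ)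
    (z : (Fin (n + 1) → ℝ) → ℝ) (a b : Fin (n - 1)) (p : Fin (n + 1) → ℝ) : ℝ :=
  (pd (xIdx a) z p - y a p) * pd (ynIdx n) (y b) p
    - (pd (xIdx b) z p - y b p) * pd (ynIdx n) (y a) p
    + pd (ynIdx n) z p * (pd (xIdx b) (y a) p - pd (xIdx a) (y b) p)

/-- Equation (E3). -/
noncomputable def E3 {n : ℕ} (y : Fin (n - 1) → (Fin (n + 1) → ℝ) → ℝ)
    (z : (Fin (n + 1) → ℝ) → ℝ) (a : Fin (n - 1)) (p : Fin (n + 1) → ℝ) : ℝ :=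
  pd (xIdx a) z p - (pd (xnIdx n) z p - p (ynIdx n)) * pd (ynIdx n) (y a) p
    + pd (ynIdx n) z p * pd (xnIdx n) (y a) p - y a p

/-- The function `Λ_{a,b}`. -/
noncomputable def Lam {n : ℕ} (y : Fin (n - 1) → (Fin (n + 1) → ℝ) → ℝ)
    (a b : Fin (n - 1)) (p : Fin (n + 1) → ℝ) : ℝ :=
  pd (ynIdx n) (y a) p * pd (xnIdx n) (y b) p - pd (ynIdx n) (y b) p * pd (xnIdx n) (y a) p
    + pd (xIdx b) (y a) p - pd (xIdx a) (y b) p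

/-- The graph map `F : ℝ^{n+1} → ℝ^{2n+1}`,
`F(x_1,…,x_n,y_n) = (x_1,…,x_n,y_1,…,y_{n-1},y_n,z)`. -/
noncomputable def graphMap (n : ℕ) (y : Fin (n - 1) → (Fin (n + 1) → ℝ) → ℝ)
    (z : (Fin (n + 1) → ℝ) → ℝ) (p : Fin (n + 1) → ℝ) : Fin (2 * n + 1) → ℝ := fun i =>
  if h1 : (i : ℕ) < n then p ⟨i, by omega⟩
  else if h2 : (i : ℕ) < 2 * n - 1 then y ⟨(i : ℕ) - n, by omega⟩ p
  else if h3 : (i : ℕ) = 2 * n - 1 then p (ynIdx n)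
  else z p

/-- The standard contact form `α = dz - Σ y_i dx_i` on `ℝ^{2n+1}` with coordinates
`(x_1,…,x_n,y_1,…,y_n,z)`, evaluated at the point `q` on the vector `v`. -/
noncomputable def contactForm (n : ℕ) (q v : Fin (2 * n + 1) → ℝ) : ℝ :=
  v ⟨2 * n, by omega⟩
    - ∑ i : Fin n, q ⟨n + i, by have := i.isLt; omega⟩ * v ⟨i, by have := i.isLt; omega⟩

/-- The standard symplectic form `ω₀ = Σ dx_i ∧ dy_i = dα` on `ℝ^{2n+1}`. -/
noncomputable def omega0 (n : ℕ) (u v : Fin (2 * n + 1) → ℝ) : ℝ :=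
  ∑ i : Fin n, (u ⟨i, by have := i.isLt; omega⟩ * v ⟨n + i, by have := i.isLt; omega⟩
    - u ⟨n + i, by have := i.isLt; omega⟩ * v ⟨i, by have := i.isLt; omega⟩)

/-- The 3-form `α ∧ ω₀` evaluated at the point `q` on the vectors `u, v, w`. -/
noncomputable def awedge (n : ℕ) (q u v w : Fin (2 * n + 1) → ℝ) : ℝ :=
  contactForm n q u * omega0 n v w - contactForm n q v * omega0 n u w
    + contactForm n q w * omega0 n u v

/-- The vector field `Ṽ_k = ∂_{x_k} - (∂y_k/∂y_n) ∂_{x_n} + (∂y_k/∂x_n) ∂_{y_n}` on `ℝ^{n+1}`. -/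
noncomputable def Vt (n : ℕ) (y : Fin (n - 1) → (Fin (n + 1) → ℝ) → ℝ) (k : Fin (n - 1))
    (p : Fin (n + 1) → ℝ) : Fin (n + 1) → ℝ :=
  (Pi.single (xIdx k) 1 : Fin (n + 1) → ℝ)
    - pd (ynIdx n) (y k) p • (Pi.single (xnIdx n) 1 : Fin (n + 1) → ℝ)
    + pd (xnIdx n) (y k) p • (Pi.single (ynIdx n) 1 : Fin (n + 1) → ℝ)

/-!
`α ∧ ω₀` is an alternating 3-form, so its pullback by `dF` vanishes as soon as it vanishes on
the triples `∂_i, ∂_j, ∂_k` with `i < j < k` in the order `x_1, …, x_n, y_n`. Such a triple has at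
most one `∂_{x_n}` and at most one `∂_{y_n}`, both at its end, and the values of the pullback on
the four kinds of triples are exactly the left-hand sides of (E0), (E1), (E2) and (E3).
-/

section AlternatingMaps

variable {R M N : Type*} [CommRing R] [AddCommGroup M] [Module R M] [AddCommGroup N] [Module R N]

theorem alternatingMap_eq_zero_of_basis_strictMono {ι : Type*} [LinearOrder ι] {k : ℕ}
    (b : Module.Basis ι R M) (f : M [⋀^Fin k]→ₗ[R] N)
    (h : ∀ s : Fin k → ι, StrictMono s → f (b ∘ s) = 0) : f = 0 := by
  refine b.ext_alternating fun s hs => ?_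
  have hsort : StrictMono (s ∘ Tuple.sort s) :=
    (Tuple.monotone_sort s).strictMono_of_injective (hs.comp (Tuple.sort s).injective)
  have hperm := f.map_perm (b ∘ s) (Tuple.sort s)
  rw [Function.comp_assoc, h _ hsort, eq_comm, smul_eq_zero_iff_eq] at hperm
  exact hperm

theorem alternatingMap_sum_apply {ι κ : Type*} (s : Finset κ) (f : κ → M [⋀^ι]→ₗ[R] N) (v : ι → M) :
    (∑ i ∈ s, f i) v = ∑ i ∈ s, f i v := by
  classical
  induction s using Finset.induction_on with
  | empty => rfl
  | insert i s hi ih => simp only [Finset.sum_insert hi, AlternatingMap.add_apply, ih]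

/-- The exterior product `φ ∧ η` of a linear form `φ` with an alternating `k`-form `η`, normalised
so that no factorials occur: `(φ ∧ η)(v) = ∑ i, (-1) ^ i * φ (v i) * η (v without v i)`. -/
def linearFormWedge {k : ℕ} (φ : M →ₗ[R] R) (η : M [⋀^Fin k]→ₗ[R] R) :
    M [⋀^Fin (k + 1)]→ₗ[R] R :=
  AlternatingMap.alternatizeUncurryFin (φ.smulRight η)

theorem linearFormWedge_apply {k : ℕ} (φ : M →ₗ[R] R) (η : M [⋀^Fin k]→ₗ[R] R)
    (v : Fin (k + 1) → M) :
    linearFormWedge φ η v = ∑ i : Fin (k + 1), (-1) ^ (i : ℕ) * (φ (v i) * η (i.removeNth v)) := by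
  simp [linearFormWedge, AlternatingMap.alternatizeUncurryFin_apply]

theorem linearFormWedge_ofSubsingleton_apply (φ ψ : M →ₗ[R] R) (u v : M) :
    linearFormWedge φ (AlternatingMap.ofSubsingleton R M R (0 : Fin 1) ψ) ![u, v] =
      φ u * ψ v - ψ u * φ v := by
  simp [linearFormWedge_apply, Fin.removeNth, sub_eq_add_neg, mul_comm]

theorem linearFormWedge_two_form_apply (φ : M →ₗ[R] R) (η : M [⋀^Fin 2]→ₗ[R] R) (u v w : M) :
    linearFormWedge φ η ![u, v, w] =
      φ u * η ![v, w] - φ v * η ![u, w] + φ w * η ![u, v] := by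
  have removeNth_one : Fin.removeNth 1 ![u, v, w] = ![u, w] := by ext i : 1; fin_cases i <;> rfl
  have removeNth_two : Fin.removeNth 2 ![u, v, w] = ![u, v] := by ext i : 1; fin_cases i <;> rfl
  simp [linearFormWedge_apply, Fin.sum_univ_three, removeNth_one, removeNth_two, sub_eq_add_neg]

end AlternatingMaps

section StandardForms

/-- `contactForm n q`, bundled as a linear form on `ℝ^{2n+1}`. -/
noncomputable def contactLinearForm (n : ℕ) (q : Fin (2 * n + 1) → ℝ) :
    (Fin (2 * n + 1) → ℝ) →ₗ[ℝ] ℝ :=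
  LinearMap.proj ⟨2 * n, by omega⟩
    - ∑ i : Fin n, q ⟨n + i, by omega⟩ • LinearMap.proj ⟨i, by omega⟩

theorem contactLinearForm_apply (n : ℕ) (q v : Fin (2 * n + 1) → ℝ) :
    contactLinearForm n q v = contactForm n q v := by
  simp [contactLinearForm, contactForm]

/-- `omega0 n = ∑ i, dx_i ∧ dy_i`, bundled as an alternating 2-form on `ℝ^{2n+1}`. -/
noncomputable def omega0AlternatingMap (n : ℕ) : (Fin (2 * n + 1) → ℝ) [⋀^Fin 2]→ₗ[ℝ] ℝ :=
  ∑ i : Fin n, linearFormWedge (LinearMap.proj ⟨i, by omega⟩)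
    (AlternatingMap.ofSubsingleton ℝ _ ℝ 0 (LinearMap.proj ⟨n + i, by omega⟩))

theorem omega0AlternatingMap_apply (n : ℕ) (u v : Fin (2 * n + 1) → ℝ) :
    omega0AlternatingMap n ![u, v] = omega0 n u v := by
  simp only [omega0AlternatingMap, omega0, alternatingMap_sum_apply,
    linearFormWedge_ofSubsingleton_apply, LinearMap.proj_apply]

/-- `awedge n q`, bundled as an alternating 3-form on `ℝ^{2n+1}`. -/
noncomputable def awedgeAlternatingMap (n : ℕ) (q : Fin (2 * n + 1) → ℝ) :
    (Fin (2 * n + 1) → ℝ) [⋀^Fin 3]→ₗ[ℝ] ℝ :=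
  linearFormWedge (contactLinearForm n q) (omega0AlternatingMap n)

theorem awedgeAlternatingMap_apply (n : ℕ) (q u v w : Fin (2 * n + 1) → ℝ) :
    awedgeAlternatingMap n q ![u, v, w] = awedge n q u v w := by
  simp only [awedgeAlternatingMap, linearFormWedge_two_form_apply, contactLinearForm_apply,
    omega0AlternatingMap_apply, awedge]

theorem awedge_map_eq_zero_of_basis_lt {ι V : Type*} [LinearOrder ι] [AddCommGroup V] [Module ℝ V]
    {n : ℕ} (b : Module.Basis ι ℝ V) (L : V →ₗ[ℝ] Fin (2 * n + 1) → ℝ) (q : Fin (2 * n + 1) → ℝ)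
    (h : ∀ i j k, i < j → j < k → awedge n q (L (b i)) (L (b j)) (L (b k)) = 0) (u v w : V) :
    awedge n q (L u) (L v) (L w) = 0 := by
  have apply_eq (f : Fin 3 → V) : (awedgeAlternatingMap n q).compLinearMap L f =
      awedge n q (L (f 0)) (L (f 1)) (L (f 2)) := by
    rw [← awedgeAlternatingMap_apply, AlternatingMap.compLinearMap_apply]
    congr 1
    ext i : 1
    fin_cases i <;> rfl
  have pullback_eq_zero : (awedgeAlternatingMap n q).compLinearMap L = 0 :=
    alternatingMap_eq_zero_of_basis_strictMono b _ fun s hs => by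
      rw [apply_eq]
      exact h _ _ _ (hs (by decide)) (hs (by decide))
  simpa [pullback_eq_zero] using (apply_eq ![u, v, w]).symm

end StandardForms

section CoordinateIndices

variable {n : ℕ}

theorem xIdx_injective : Function.Injective (xIdx (n := n)) :=
  Fin.castLE_injective (by omega)

theorem xIdx_ne_xnIdx (a : Fin (n - 1)) : xIdx a ≠ xnIdx n :=
  Fin.ne_of_lt a.isLt

theorem xIdx_ne_ynIdx (a : Fin (n - 1)) : xIdx a ≠ ynIdx n :=
  Fin.ne_of_lt (a.isLt.trans_le (Nat.sub_le n 1))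

theorem xnIdx_ne_ynIdx (hn : 0 < n) : xnIdx n ≠ ynIdx n :=
  Fin.ne_of_lt (Nat.sub_one_lt_of_lt hn)

theorem exists_xIdx_eq {i : Fin (n + 1)} (hi : (i : ℕ) < n - 1) : ∃ a : Fin (n - 1), xIdx a = i :=
  ⟨⟨i, hi⟩, rfl⟩

theorem forall_lt_lt_of_idx {P : Fin (n + 1) → Fin (n + 1) → Fin (n + 1) → Prop}
    (hxxx : ∀ a b c, P (xIdx a) (xIdx b) (xIdx c)) (hxxxn : ∀ a b, P (xIdx a) (xIdx b) (xnIdx n))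
    (hxxyn : ∀ a b, P (xIdx a) (xIdx b) (ynIdx n)) (hxxnyn : ∀ a, P (xIdx a) (xnIdx n) (ynIdx n))
    (i j k : Fin (n + 1)) (hij : i < j) (hjk : j < k) : P i j k := by
  obtain ⟨a, rfl⟩ : ∃ a, xIdx a = i := exists_xIdx_eq (by omega)
  rcases lt_or_ge (j : ℕ) (n - 1) with hj | hj
  · obtain ⟨b, rfl⟩ := exists_xIdx_eq hj
    obtain hk | hk | hk : (k : ℕ) < n - 1 ∨ (k : ℕ) = n - 1 ∨ (k : ℕ) = n := by omega
    · obtain ⟨c, rfl⟩ := exists_xIdx_eq hk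
      exact hxxx a b c
    · obtain rfl : k = xnIdx n := Fin.ext hk
      exact hxxxn a b
    · obtain rfl : k = ynIdx n := Fin.ext hk
      exact hxxyn a b
  · obtain rfl : j = xnIdx n := Fin.ext (show (j : ℕ) = n - 1 by omega)
    obtain rfl : k = ynIdx n := Fin.ext (show (k : ℕ) = n by omega)
    exact hxxnyn a

theorem sum_fin_eq_sum_add_last {M : Type*} [AddCommMonoid M] (hn : 0 < n) (f : Fin n → M) :
    ∑ i, f i = ∑ a : Fin (n - 1), f ⟨a, by omega⟩ + f ⟨n - 1, by omega⟩ := by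
  obtain ⟨m, rfl⟩ := Nat.exists_eq_add_one.2 hn
  exact Fin.sum_univ_castSucc f

end CoordinateIndices

section CoordinateDerivatives

variable {𝕜 ι : Type*} [NontriviallyNormedField 𝕜]

theorem fderiv_coord_apply (i : ι) (p u : ι → 𝕜) : fderiv 𝕜 (fun q : ι → 𝕜 => q i) p u = u i := by
  rw [(hasFDerivAt_apply i p).fderiv, ContinuousLinearMap.proj_apply]

theorem fderiv_pi_apply {E : Type*} [NormedAddCommGroup E] [NormedSpace 𝕜 E] {F : ι → Type*}
    [∀ i, NormedAddCommGroup (F i)] [∀ i, NormedSpace 𝕜 (F i)] {f : E → ∀ i, F i} {p : E}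
    (hf : DifferentiableAt 𝕜 f p) (u : E) (i : ι) :
    fderiv 𝕜 f p u i = fderiv 𝕜 (fun q => f q i) p u := by
  rw [fderiv_apply hf, ContinuousLinearMap.comp_apply, ContinuousLinearMap.proj_apply]

end CoordinateDerivatives

section GraphMap

variable {n : ℕ} {y : Fin (n - 1) → (Fin (n + 1) → ℝ) → ℝ} {z : (Fin (n + 1) → ℝ) → ℝ}
  {p : Fin (n + 1) → ℝ}

theorem graphMap_x (a : Fin (n - 1)) : graphMap n y z p ⟨a, by omega⟩ = p (xIdx a) := by
  rw [graphMap, dif_pos (show (a : ℕ) < n by omega)]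
  rfl

theorem graphMap_xn (hn : 0 < n) : graphMap n y z p ⟨n - 1, by omega⟩ = p (xnIdx n) := by
  rw [graphMap, dif_pos (show n - 1 < n by omega)]
  rfl

theorem graphMap_y (a : Fin (n - 1)) : graphMap n y z p ⟨n + a, by omega⟩ = y a p := by
  rw [graphMap, dif_neg (show ¬ n + a < n by omega), dif_pos (show n + a < 2 * n - 1 by omega)]
  simp only [Nat.add_sub_cancel_left]

theorem graphMap_yn (hn : 0 < n) : graphMap n y z p ⟨n + (n - 1), by omega⟩ = p (ynIdx n) := by
  rw [graphMap, dif_neg (show ¬ n + (n - 1) < n by omega),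
    dif_neg (show ¬ n + (n - 1) < 2 * n - 1 by omega),
    dif_pos (show n + (n - 1) = 2 * n - 1 by omega)]

theorem graphMap_z (hn : 0 < n) : graphMap n y z p ⟨2 * n, by omega⟩ = z p := by
  rw [graphMap, dif_neg (show ¬ 2 * n < n by omega), dif_neg (show ¬ 2 * n < 2 * n - 1 by omega),
    dif_neg (show ¬ 2 * n = 2 * n - 1 by omega)]

theorem differentiableAt_graphMap (hy : ∀ a, DifferentiableAt ℝ (y a) p)
    (hz : DifferentiableAt ℝ z p) : DifferentiableAt ℝ (graphMap n y z) p := by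
  refine differentiableAt_pi.2 fun i => ?_
  unfold graphMap
  split_ifs
  · fun_prop
  · exact hy _
  · fun_prop
  · exact hz

theorem contactForm_fderiv_graphMap (hn : 0 < n) (hF : DifferentiableAt ℝ (graphMap n y z) p)
    (u : Fin (n + 1) → ℝ) :
    contactForm n (graphMap n y z p) (fderiv ℝ (graphMap n y z) p u) =
      fderiv ℝ z p u - (∑ a, y a p * u (xIdx a) + p (ynIdx n) * u (xnIdx n)) := by
  simp only [contactForm, sum_fin_eq_sum_add_last hn, fderiv_pi_apply hF, graphMap_x,
    graphMap_xn hn, graphMap_y, graphMap_yn hn, graphMap_z hn, fderiv_coord_apply]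

theorem omega0_fderiv_graphMap (hn : 0 < n) (hF : DifferentiableAt ℝ (graphMap n y z) p)
    (u v : Fin (n + 1) → ℝ) :
    omega0 n (fderiv ℝ (graphMap n y z) p u) (fderiv ℝ (graphMap n y z) p v) =
      ∑ a, (u (xIdx a) * fderiv ℝ (y a) p v - fderiv ℝ (y a) p u * v (xIdx a))
        + (u (xnIdx n) * v (ynIdx n) - u (ynIdx n) * v (xnIdx n)) := by
  simp only [omega0, sum_fin_eq_sum_add_last hn, fderiv_pi_apply hF, graphMap_x,
    graphMap_xn hn, graphMap_y, graphMap_yn hn, fderiv_coord_apply]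

end GraphMap

section GraphTangent

variable {n : ℕ} {y : Fin (n - 1) → (Fin (n + 1) → ℝ) → ℝ} {z : (Fin (n + 1) → ℝ) → ℝ}
  {p : Fin (n + 1) → ℝ}

/-- The tangent vector `dF_p(∂_i)` of the graph, for the `i`-th of the coordinates
`(x_1, …, x_n, y_n)`. -/
noncomputable def graphTangent (y : Fin (n - 1) → (Fin (n + 1) → ℝ) → ℝ)
    (z : (Fin (n + 1) → ℝ) → ℝ) (p : Fin (n + 1) → ℝ) (i : Fin (n + 1)) : Fin (2 * n + 1) → ℝ :=
  fderiv ℝ (graphMap n y z) p (Pi.single i 1)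

theorem contactForm_graphTangent_x (hn : 0 < n) (hF : DifferentiableAt ℝ (graphMap n y z) p)
    (a : Fin (n - 1)) :
    contactForm n (graphMap n y z p) (graphTangent y z p (xIdx a)) = pd (xIdx a) z p - y a p := by
  simp [graphTangent, contactForm_fderiv_graphMap hn hF, pd, Pi.single_apply,
    xIdx_injective.eq_iff, (xIdx_ne_xnIdx _).symm]

theorem contactForm_graphTangent_xn (hn : 0 < n) (hF : DifferentiableAt ℝ (graphMap n y z) p) :
    contactForm n (graphMap n y z p) (graphTangent y z p (xnIdx n)) =
      pd (xnIdx n) z p - p (ynIdx n) := by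
  simp [graphTangent, contactForm_fderiv_graphMap hn hF, pd, xIdx_ne_xnIdx]

theorem contactForm_graphTangent_yn (hn : 0 < n) (hF : DifferentiableAt ℝ (graphMap n y z) p) :
    contactForm n (graphMap n y z p) (graphTangent y z p (ynIdx n)) = pd (ynIdx n) z p := by
  simp [graphTangent, contactForm_fderiv_graphMap hn hF, pd, xIdx_ne_ynIdx,
    xnIdx_ne_ynIdx hn]

theorem omega0_graphTangent_x_x (hn : 0 < n) (hF : DifferentiableAt ℝ (graphMap n y z) p)
    (a b : Fin (n - 1)) :
    omega0 n (graphTangent y z p (xIdx a)) (graphTangent y z p (xIdx b)) =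
      pd (xIdx b) (y a) p - pd (xIdx a) (y b) p := by
  simp [graphTangent, omega0_fderiv_graphMap hn hF, pd, Pi.single_apply,
    xIdx_injective.eq_iff, (xIdx_ne_xnIdx _).symm]

theorem omega0_graphTangent_x_xn (hn : 0 < n) (hF : DifferentiableAt ℝ (graphMap n y z) p)
    (a : Fin (n - 1)) :
    omega0 n (graphTangent y z p (xIdx a)) (graphTangent y z p (xnIdx n)) =
      pd (xnIdx n) (y a) p := by
  simp [graphTangent, omega0_fderiv_graphMap hn hF, pd, Pi.single_apply,
    xIdx_injective.eq_iff, xIdx_ne_xnIdx, (xIdx_ne_xnIdx _).symm, (xIdx_ne_ynIdx _).symm]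

theorem omega0_graphTangent_x_yn (hn : 0 < n) (hF : DifferentiableAt ℝ (graphMap n y z) p)
    (a : Fin (n - 1)) :
    omega0 n (graphTangent y z p (xIdx a)) (graphTangent y z p (ynIdx n)) =
      pd (ynIdx n) (y a) p := by
  simp [graphTangent, omega0_fderiv_graphMap hn hF, pd, Pi.single_apply,
    xIdx_injective.eq_iff, xIdx_ne_ynIdx, (xIdx_ne_xnIdx _).symm, (xIdx_ne_ynIdx _).symm]

theorem omega0_graphTangent_xn_yn (hn : 0 < n) (hF : DifferentiableAt ℝ (graphMap n y z) p) :
    omega0 n (graphTangent y z p (xnIdx n)) (graphTangent y z p (ynIdx n)) = 1 := by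
  simp [graphTangent, omega0_fderiv_graphMap hn hF, xIdx_ne_xnIdx, xIdx_ne_ynIdx,
    xnIdx_ne_ynIdx hn]

theorem awedge_graphTangent_x_x_x (hn : 0 < n) (hF : DifferentiableAt ℝ (graphMap n y z) p)
    (a b c : Fin (n - 1)) :
    awedge n (graphMap n y z p) (graphTangent y z p (xIdx a)) (graphTangent y z p (xIdx b))
      (graphTangent y z p (xIdx c)) = E0 y z a b c p := by
  simp only [awedge, contactForm_graphTangent_x hn hF, omega0_graphTangent_x_x hn hF, E0]

theorem awedge_graphTangent_x_x_xn (hn : 0 < n) (hF : DifferentiableAt ℝ (graphMap n y z) p)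
    (a b : Fin (n - 1)) :
    awedge n (graphMap n y z p) (graphTangent y z p (xIdx a)) (graphTangent y z p (xIdx b))
      (graphTangent y z p (xnIdx n)) = E1 y z a b p := by
  simp only [awedge, contactForm_graphTangent_x hn hF, contactForm_graphTangent_xn hn hF,
    omega0_graphTangent_x_x hn hF, omega0_graphTangent_x_xn hn hF, E1]

theorem awedge_graphTangent_x_x_yn (hn : 0 < n) (hF : DifferentiableAt ℝ (graphMap n y z) p)
    (a b : Fin (n - 1)) :
    awedge n (graphMap n y z p) (graphTangent y z p (xIdx a)) (graphTangent y z p (xIdx b))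
      (graphTangent y z p (ynIdx n)) = E2 y z a b p := by
  simp only [awedge, contactForm_graphTangent_x hn hF, contactForm_graphTangent_yn hn hF,
    omega0_graphTangent_x_x hn hF, omega0_graphTangent_x_yn hn hF, E2]

theorem awedge_graphTangent_x_xn_yn (hn : 0 < n) (hF : DifferentiableAt ℝ (graphMap n y z) p)
    (a : Fin (n - 1)) :
    awedge n (graphMap n y z p) (graphTangent y z p (xIdx a)) (graphTangent y z p (xnIdx n))
      (graphTangent y z p (ynIdx n)) = E3 y z a p := by
  simp only [awedge, contactForm_graphTangent_x hn hF, contactForm_graphTangent_xn hn hF,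
    contactForm_graphTangent_yn hn hF, omega0_graphTangent_x_xn hn hF,
    omega0_graphTangent_x_yn hn hF, omega0_graphTangent_xn_yn hn hF, E3]
  ring

end GraphTangent

theorem coisotropic_iff_foliation_equations_general {n : ℕ} (hn : 0 < n)
    {y : Fin (n - 1) → (Fin (n + 1) → ℝ) → ℝ} {z : (Fin (n + 1) → ℝ) → ℝ} {p : Fin (n + 1) → ℝ}
    (hy : ∀ a, DifferentiableAt ℝ (y a) p) (hz : DifferentiableAt ℝ z p) :
    (∀ u v w : Fin (n + 1) → ℝ,
        awedge n (graphMap n y z p)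
          (fderiv ℝ (graphMap n y z) p u) (fderiv ℝ (graphMap n y z) p v)
          (fderiv ℝ (graphMap n y z) p w) = 0) ↔
      (∀ a b c, E0 y z a b c p = 0) ∧ (∀ a b, E1 y z a b p = 0) ∧
        (∀ a b, E2 y z a b p = 0) ∧ (∀ a, E3 y z a p = 0) := by
  have hF := differentiableAt_graphMap hy hz
  simp only [← awedge_graphTangent_x_x_x hn hF, ← awedge_graphTangent_x_x_xn hn hF,
    ← awedge_graphTangent_x_x_yn hn hF, ← awedge_graphTangent_x_xn_yn hn hF]
  constructor
  · exact fun h => ⟨fun _ _ _ => h _ _ _, fun _ _ => h _ _ _, fun _ _ => h _ _ _, fun _ => h _ _ _⟩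
  · rintro ⟨h0, h1, h2, h3⟩
    refine awedge_map_eq_zero_of_basis_lt (Pi.basisFun ℝ (Fin (n + 1)))
      (fderiv ℝ (graphMap n y z) p).toLinearMap _ ?_
    simp only [Pi.basisFun_apply]
    exact forall_lt_lt_of_idx h0 h1 h2 h3

/-- The 3-form `α ∧ ω₀` vanishes on the image of `dF` at every point of
`U` if and only if equations (E0), (E1), (E2), (E3) hold at every point of `U`. -/
theorem coisotropic_iff_foliation_equations (n : ℕ) (hn : 2 ≤ n) (U : Set (Fin (n + 1) → ℝ)) (hU : IsOpen U)
    (y : Fin (n - 1) → (Fin (n + 1) → ℝ) → ℝ) (z : (Fin (n + 1) → ℝ) → ℝ)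
    (hy : ∀ a, ContDiffOn ℝ (⊤ : ℕ∞) (y a) U) (hz : ContDiffOn ℝ (⊤ : ℕ∞) z U) :
    (∀ p ∈ U, ∀ u v w : Fin (n + 1) → ℝ,
        awedge n (graphMap n y z p)
          (fderiv ℝ (graphMap n y z) p u) (fderiv ℝ (graphMap n y z) p v)
          (fderiv ℝ (graphMap n y z) p w) = 0) ↔
      (∀ p ∈ U, (∀ a b c, E0 y z a b c p = 0) ∧ (∀ a b, E1 y z a b p = 0) ∧
        (∀ a b, E2 y z a b p = 0) ∧ (∀ a, E3 y z a p = 0)) := by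
  refine forall₂_congr fun p hp => coisotropic_iff_foliation_equations_general (by omega) ?_ ?_
  · exact fun a => ((hy a).contDiffAt (hU.mem_nhds hp)).differentiableAt (by simp)
  · exact (hz.contDiffAt (hU.mem_nhds hp)).differentiableAt (by simp)
end

section
/- Let n ≥ 1, let V ⊆ ℝ^{n+1} be open with coordinates (t, x_1,…,x_n), and let f, R_1,…,R_n : V → ℝ be smooth. On the open set W = {(t,x,y) : (t,x) ∈ V, y ∈ ℝ^n} ⊆ ℝ^{2n+1} define the 1-form α = (f(t,x) + Σ_{i=1}^n R_i(t,x)·y_i)·dt − Σ_{i=1}^n y_i·dx_i. Then the (2n+1)-form α ∧ (dα)^n equals n!·f(t,x) times the volume form dx_1 ∧ dy_1 ∧ ⋯ ∧ dx_n ∧ dy_n ∧ dt at every point of W; in particular, α is a contact form (α ∧ (dα)^n ≠ 0) at every point where f > 0. -/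
open scoped BigOperators

/-- The exterior derivative of a 1-form `A` (a map assigning to each point a linear
functional, here recorded as a function of two arguments), evaluated at `q` on `u, v`:
`(dA)_q(u,v) = D(A(·)(v))_q(u) - D(A(·)(u))_q(v)`. -/
noncomputable def extD {N : ℕ} (A : (Fin N → ℝ) → (Fin N → ℝ) → ℝ)
    (q u v : Fin N → ℝ) : ℝ :=
  fderiv ℝ (fun r => A r v) q u - fderiv ℝ (fun r => A r u) q v

/-- Evaluation of the `(2m+1)`-form `β ∧ ω^{∧m}` (a 1-form `β` wedged with `m` copies of a
2-form `ω`, with the standard wedge conventions) on the vectors `v 0, …, v 2m`. -/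
noncomputable def wedgeEval (N m : ℕ) (β : (Fin N → ℝ) → ℝ)
    (ω : (Fin N → ℝ) → (Fin N → ℝ) → ℝ) (v : Fin (2 * m + 1) → Fin N → ℝ) : ℝ :=
  (1 / 2 ^ m : ℝ) * ∑ σ : Equiv.Perm (Fin (2 * m + 1)),
    ((Equiv.Perm.sign σ : ℤ) : ℝ) * β (v (σ ⟨0, by omega⟩)) *
      ∏ i : Fin m,
        ω (v (σ ⟨2 * (i : ℕ) + 1, by have := i.isLt; omega⟩))
          (v (σ ⟨2 * (i : ℕ) + 2, by have := i.isLt; omega⟩))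

/-- Projection of `ℝ^{2n+1}` with coordinates `(t, x_1,…,x_n, y_1,…,y_n)` onto the
`(t,x)`-factor `ℝ^{n+1}`. -/
def proj12 (n : ℕ) (q : Fin (2 * n + 1) → ℝ) : Fin (n + 1) → ℝ :=
  fun j => q (Fin.castLE (by omega) j)

/-- The 1-form `α = (f(t,x) + Σ R_i(t,x) y_i) dt - Σ y_i dx_i` on
`W ⊆ ℝ^{2n+1}` with coordinates `(t, x_1,…,x_n, y_1,…,y_n)`. -/
noncomputable def alpha12 (n : ℕ) (f : (Fin (n + 1) → ℝ) → ℝ)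
    (R : Fin n → (Fin (n + 1) → ℝ) → ℝ) (q v : Fin (2 * n + 1) → ℝ) : ℝ :=
  (f (proj12 n q) +
      ∑ i : Fin n, R i (proj12 n q) * q ⟨n + 1 + i, by have := i.isLt; omega⟩) *
    v ⟨0, by omega⟩
  - ∑ i : Fin n, q ⟨n + 1 + i, by have := i.isLt; omega⟩ * v ⟨1 + i, by have := i.isLt; omega⟩

/-- The position of the `j`-th covector in the volume form
`dx_1 ∧ dy_1 ∧ ⋯ ∧ dx_n ∧ dy_n ∧ dt`, in terms of the coordinate indices
`(t, x_1,…,x_n, y_1,…,y_n)` of `ℝ^{2n+1}`. -/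
def ord12 (n : ℕ) (j : Fin (2 * n + 1)) : Fin (2 * n + 1) :=
  if h1 : (j : ℕ) = 2 * n then ⟨0, by omega⟩
  else if h2 : (j : ℕ) % 2 = 0 then ⟨(j : ℕ) / 2 + 1, by have := j.isLt; omega⟩
  else ⟨n + (j : ℕ) / 2 + 1, by have := j.isLt; omega⟩

/-!
Write `α = H dt - ∑ y_i dx_i` with `H = f + ∑ R_i y_i`, so that `dα = dH ∧ dt + ∑ dx_i ∧ dy_i`. The
vector `ξ = ∂_t + ∑ (∂H/∂y_i ∂_{x_i} - ∂H/∂x_i ∂_{y_i})` lies in the kernel of `dα`. An alternating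
form does not notice if `∂_t` is replaced by `ξ` next to all the `∂_{x_i}` and `∂_{y_i}`, and after
this replacement the only surviving terms of `α ∧ (dα)^n` are those in which `α` eats `ξ`. What
remains is `α(ξ)` times the `n`-th power of the standard symplectic form on its symplectic basis,
which is `n!`, and `α(ξ) = H - ∑ y_i ∂H/∂y_i = f` because `H` is affine in `y`.
-/

open Equiv Module

section Permutations

variable {ι κ : Type*}

theorem prodShear_injective [Nonempty κ] :
    Function.Injective fun p : Perm ι × (ι → Perm κ) => prodShear p.1 p.2 := by
  intro p p' h
  have happ (i : ι) (k : κ) : (p.1 i, p.2 i k) = (p'.1 i, p'.2 i k) := DFunLike.congr_fun h (i, k)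
  refine Prod.ext (Equiv.ext fun i => ?_) (funext fun i => Equiv.ext fun k => ?_)
  · exact congrArg Prod.fst (happ i (Classical.arbitrary κ))
  · exact congrArg Prod.snd (happ i k)

theorem exists_prodShear_eq [Finite ι] [Finite κ] [Nonempty κ] (τ : Perm (ι × κ))
    (hτ : ∀ i k l, (τ (i, k)).1 = (τ (i, l)).1) : ∃ g ε, prodShear g ε = τ := by
  let k₀ : κ := Classical.arbitrary κ
  have hbase : Function.Surjective fun i => (τ (i, k₀)).1 := fun j => by
    obtain ⟨⟨i, k⟩, hik⟩ := τ.surjective (j, k₀)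
    exact ⟨i, (hτ i k₀ k).trans (congrArg Prod.fst hik)⟩
  have hfiber (i : ι) : Function.Injective fun k => (τ (i, k)).2 := fun k l hkl =>
    congrArg Prod.snd (τ.injective (Prod.ext (hτ i k l) hkl))
  refine ⟨.ofBijective _ (Finite.surjective_iff_bijective.1 hbase),
    fun i => .ofBijective _ (Finite.injective_iff_bijective.1 (hfiber i)), ?_⟩
  ext1 ⟨i, k⟩
  exact Prod.ext (hτ i k₀ k) rfl

variable [Fintype κ] [DecidableEq κ]

theorem sum_perm_option_eq {M : Type*} [AddCommMonoid M] (F : Perm (Option κ) → M)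
    (hF : ∀ σ, σ none ≠ none → F σ = 0) :
    ∑ σ, F σ = ∑ τ : Perm κ, F (optionCongr τ) := by
  rw [← Perm.decomposeOption.symm.sum_comp, Fintype.sum_prod_type, Fintype.sum_option]
  simp [Finset.sum_eq_zero, hF, Perm.mul_def]

theorem sign_prodShear [Fintype ι] [DecidableEq ι] (g : Perm ι) (ε : ι → Perm κ) :
    Perm.sign (prodShear g ε) = Perm.sign g ^ Fintype.card κ * ∏ i, Perm.sign (ε i) := by
  have h : prodShear g ε = prodCongrLeft (fun _ : κ => g) * prodCongrRight ε := rfl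
  rw [h, Perm.sign_mul, Perm.sign_prodCongrLeft, Perm.sign_prodCongrRight, Finset.prod_const,
    Finset.card_univ]

end Permutations

section SymplecticMatrix

variable (ι R : Type*) [DecidableEq ι] [CommRing R]

/-- The Gram matrix of the standard symplectic form `∑ i, dx_i ∧ dy_i`, where `(i, 0)` indexes the
`x_i`-direction and `(i, 1)` the `y_i`-direction. -/
def stdSymplectic : Matrix (ι × Fin 2) (ι × Fin 2) R :=
  Matrix.kronecker 1 !![0, 1; -1, 0]

variable {ι R}

theorem stdSymplectic_apply_of_fst_ne {a b : ι × Fin 2} (h : a.1 ≠ b.1) :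
    stdSymplectic ι R a b = 0 := by
  simp [stdSymplectic, h]

theorem stdSymplectic_apply_perm (j : ι) (ε : Perm (Fin 2)) :
    stdSymplectic ι R (j, ε 0) (j, ε 1) = ((Perm.sign ε : ℤ) : R) := by
  have h : (!![0, 1; -1, 0] : Matrix (Fin 2) (Fin 2) ℤ) (ε 0) (ε 1) = Perm.sign ε := by
    revert ε; decide
  rw [← h]
  generalize ε 0 = k, ε 1 = l
  fin_cases k <;> fin_cases l <;> simp [stdSymplectic]

theorem sum_sign_smul_prod_stdSymplectic [Fintype ι] :
    ∑ τ : Perm (ι × Fin 2), Perm.sign τ • ∏ i, stdSymplectic ι R (τ (i, 0)) (τ (i, 1)) =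
      2 ^ Fintype.card ι * (Fintype.card ι).factorial := by
  have hsum : ∑ _p : Perm ι × (ι → Perm (Fin 2)), (1 : R) =
      ∑ τ : Perm (ι × Fin 2), Perm.sign τ • ∏ i, stdSymplectic ι R (τ (i, 0)) (τ (i, 1)) := by
    refine Finset.sum_of_injOn (fun p => prodShear p.1 p.2) prodShear_injective.injOn
      (fun _ _ => Finset.mem_coe.2 (Finset.mem_univ _)) (fun τ _ hτ => ?_) (fun p _ => ?_)
    · obtain ⟨i, hi⟩ : ∃ i, (τ (i, 0)).1 ≠ (τ (i, 1)).1 := by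
        by_contra! hfst
        obtain ⟨g, ε, rfl⟩ := exists_prodShear_eq τ (by simp [Fin.forall_fin_two, hfst])
        exact hτ ⟨(g, ε), Finset.mem_coe.2 (Finset.mem_univ _), rfl⟩
      rw [Finset.prod_eq_zero (Finset.mem_univ i) (stdSymplectic_apply_of_fst_ne hi), smul_zero]
    · have hprod : ∏ i, stdSymplectic ι R (prodShear p.1 p.2 (i, 0)) (prodShear p.1 p.2 (i, 1)) =
          ((∏ i, Perm.sign (p.2 i) : ℤˣ) : ℤ) := by
        simp [stdSymplectic_apply_perm]
      rw [hprod, sign_prodShear, Fintype.card_fin, Int.units_sq, one_mul, Units.smul_def,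
        zsmul_eq_mul, ← Int.cast_mul, Int.units_coe_mul_self, Int.cast_one]
  rw [← hsum]
  simp [Fintype.card_perm, mul_comm]

end SymplecticMatrix

section WedgeProduct

variable {ι R E : Type*} [Fintype ι] [CommRing R] [AddCommGroup E] [Module R E]

/-- The tensor product `β ⊗ ω ⊗ ⋯ ⊗ ω` of a linear form with one copy of the bilinear form `ω` for
each `i : ι`. The slot of `β` is `none`, those of the `i`-th copy of `ω` are `(i, 0)` and `(i, 1)`.
Its alternatization is `2 ^ card ι` times the wedge product of `β` and `card ι` copies of `ω`. -/
noncomputable def tensorForm (ι : Type*) [Fintype ι] (β : Dual R E) (ω : LinearMap.BilinForm R E) :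
    MultilinearMap R (fun _ : Option (ι × Fin 2) => E) R :=
  let ωSlots : MultilinearMap R (fun _ : Fin 2 => E) R :=
    LinearMap.uncurryLeft
      ((MultilinearMap.ofSubsingletonₗ R R E R (0 : Fin 1)).toLinearMap ∘ₗ ω)
  ((LinearMap.mul' R R).compMultilinearMap
    ((MultilinearMap.ofSubsingleton R E R () β).domCoprod
      (((MultilinearMap.mkPiAlgebra R ι R).compMultilinearMap fun _ => ωSlots).domDomCongr
        (sigmaEquivProd ι (Fin 2))))).domDomCongr
    ((optionEquivSumPUnit _).trans (sumComm _ _)).symm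

theorem tensorForm_apply (β : Dual R E) (ω : LinearMap.BilinForm R E)
    (v : Option (ι × Fin 2) → E) :
    tensorForm ι β ω v = β (v none) * ∏ i, ω (v (some (i, 0))) (v (some (i, 1))) :=
  rfl

theorem alternatization_tensorForm_apply [DecidableEq ι] (β : Dual R E)
    (ω : LinearMap.BilinForm R E) (v : Option (ι × Fin 2) → E) :
    (tensorForm ι β ω).alternatization v = ∑ σ : Perm (Option (ι × Fin 2)),
      Perm.sign σ • (β (v (σ none)) * ∏ i, ω (v (σ (some (i, 0)))) (v (σ (some (i, 1))))) := by
  simp only [MultilinearMap.alternatization_apply, MultilinearMap.domDomCongr_apply,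
    tensorForm_apply]

theorem alternatingMap_update_eq_of_sub_mem_span {κ F : Type*} [DecidableEq κ] [AddCommGroup F]
    [Module R F] (g : E [⋀^κ]→ₗ[R] F) (v : κ → E) (k : κ) {w : E}
    (hw : w - v k ∈ Submodule.span R (v '' {k}ᶜ)) : g (Function.update v k w) = g v := by
  let slot : E →ₗ[R] F := g.toMultilinearMap.toLinearMap v k
  have hspan : Submodule.span R (v '' {k}ᶜ) ≤ LinearMap.ker slot := by
    rw [Submodule.span_le]
    rintro _ ⟨l, hl, rfl⟩
    exact g.map_update_self v (Ne.symm hl)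
  calc g (Function.update v k w) = slot (v k) := LinearMap.sub_mem_ker_iff.1 (hspan hw)
    _ = g v := by simp [slot]

theorem alternatization_tensorForm_of_apply_none_eq_zero [DecidableEq ι] (β : Dual R E)
    {ω : LinearMap.BilinForm R E} (hω : ω.IsAlt) {v : Option (ι × Fin 2) → E}
    (hv : ∀ a b, ω (v (some a)) (v (some b)) = stdSymplectic ι R a b)
    (hnone : ω (v none) = 0) :
    (tensorForm ι β ω).alternatization v =
      2 ^ Fintype.card ι * (Fintype.card ι).factorial * β (v none) := by
  have hnone_left (x : E) : ω (v none) x = 0 := by rw [hnone, LinearMap.zero_apply]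
  have hnone_right (x : E) : ω x (v none) = 0 := hω.isRefl _ _ (hnone_left x)
  rw [alternatization_tensorForm_apply, sum_perm_option_eq, ← sum_sign_smul_prod_stdSymplectic,
    Finset.sum_mul]
  · refine Finset.sum_congr rfl fun τ _ => ?_
    simp [hv, mul_comm, mul_smul_comm]
  · intro σ hσ
    obtain ⟨_ | ⟨i, k⟩, hnone_eq⟩ := σ.surjective none
    · exact absurd hnone_eq hσ
    rw [Finset.prod_eq_zero (Finset.mem_univ i), mul_zero, smul_zero]
    fin_cases k
    · exact hnone_eq ▸ hnone_left _
    · exact hnone_eq ▸ hnone_right _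

theorem alternatization_tensorForm_of_apply_eq_zero [DecidableEq ι] (β : Dual R E)
    {ω : LinearMap.BilinForm R E} (hω : ω.IsAlt) {v : Option (ι × Fin 2) → E}
    (hv : ∀ a b, ω (v (some a)) (v (some b)) = stdSymplectic ι R a b)
    {ξ : E} (hξ : ω ξ = 0)
    (hspan : ξ - v none ∈ Submodule.span R (v '' {none}ᶜ)) :
    (tensorForm ι β ω).alternatization v =
      2 ^ Fintype.card ι * (Fintype.card ι).factorial * β ξ := by
  rw [← alternatingMap_update_eq_of_sub_mem_span _ v none hspan,
    alternatization_tensorForm_of_apply_none_eq_zero β hω (by simpa using hv) (by simpa using hξ),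
    Function.update_self]

end WedgeProduct

section NormalForm

variable {ι R E : Type*} [Fintype ι] [CommRing R] [AddCommGroup E] [Module R E]

/-- The wedge product of two linear forms. -/
def covectorWedge (φ ψ : Dual R E) : LinearMap.BilinForm R E :=
  .linMulLin φ ψ - .linMulLin ψ φ

@[simp]
theorem covectorWedge_apply (φ ψ : Dual R E) (u v : E) :
    covectorWedge φ ψ u v = φ u * ψ v - ψ u * φ v :=
  rfl

variable (b : Basis (Option (ι × Fin 2)) R E)

/-- The 1-form `H dt - ∑ i, y_i dx_i` at a point, where `dt`, `dx_i`, `dy_i` are the coordinate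
covectors of `b` with indices `none`, `(i, 0)`, `(i, 1)`. -/
noncomputable def normalOneForm (H : R) (y : ι → R) : Dual R E :=
  H • b.coord none - ∑ i, y i • b.coord (some (i, 0))

/-- The 2-form `L ∧ dt + ∑ i, dx_i ∧ dy_i`, which is the exterior derivative of `normalOneForm`
when `L` is the differential of `H`. -/
noncomputable def normalTwoForm (L : Dual R E) : LinearMap.BilinForm R E :=
  covectorWedge L (b.coord none) +
    ∑ i, covectorWedge (b.coord (some (i, 0))) (b.coord (some (i, 1)))

/-- The vector `∂_t + ∑ i, (L(∂_{y_i}) ∂_{x_i} - L(∂_{x_i}) ∂_{y_i})` in the kernel of the 2-form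
`normalTwoForm b L`. -/
noncomputable def characteristicVector (L : Dual R E) : E :=
  b none + ∑ i, (L (b (some (i, 1))) • b (some (i, 0)) - L (b (some (i, 0))) • b (some (i, 1)))

variable (H : R) (y : ι → R) (L : Dual R E)

theorem normalTwoForm_apply (u v : E) :
    normalTwoForm b L u v = L u * b.coord none v - b.coord none u * L v +
      ∑ i, (b.coord (some (i, 0)) u * b.coord (some (i, 1)) v -
        b.coord (some (i, 1)) u * b.coord (some (i, 0)) v) := by
  simp [normalTwoForm, LinearMap.sum_apply]

theorem isAlt_normalTwoForm : (normalTwoForm b L).IsAlt := fun u => by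
  simp [normalTwoForm_apply, mul_comm]

theorem normalTwoForm_some_some [DecidableEq ι] (a c : ι × Fin 2) :
    normalTwoForm b L (b (some a)) (b (some c)) = stdSymplectic ι R a c := by
  obtain ⟨i, k⟩ := a
  obtain ⟨j, l⟩ := c
  fin_cases k <;> fin_cases l <;>
    simp [normalTwoForm_apply, stdSymplectic, Finsupp.single_apply, Matrix.one_apply, eq_comm]

theorem normalTwoForm_characteristicVector :
    normalTwoForm b L (characteristicVector b L) = 0 := by
  classical
  refine b.ext fun x => ?_
  rcases x with _ | ⟨j, k⟩
  · simp [normalTwoForm_apply, characteristicVector, Finsupp.single_apply, mul_comm]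
  · fin_cases k <;>
    simp [normalTwoForm_apply, characteristicVector, Finsupp.single_apply]

theorem characteristicVector_sub_mem_span :
    characteristicVector b L - b none ∈ Submodule.span R (b '' {none}ᶜ) := by
  have hmem (a : ι × Fin 2) : b (some a) ∈ Submodule.span R (b '' {none}ᶜ) :=
    Submodule.subset_span ⟨some a, by simp, rfl⟩
  rw [characteristicVector, add_sub_cancel_left]
  exact sum_mem fun i _ =>
    sub_mem (Submodule.smul_mem _ _ (hmem (i, 0))) (Submodule.smul_mem _ _ (hmem (i, 1)))

theorem normalOneForm_characteristicVector :
    normalOneForm b H y (characteristicVector b L) = H - ∑ i, y i * L (b (some (i, 1))) := by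
  classical
  simp [normalOneForm, characteristicVector, Finsupp.single_apply]

theorem alternatization_tensorForm_normalForms [DecidableEq ι] :
    (tensorForm ι (normalOneForm b H y) (normalTwoForm b L)).alternatization b =
      2 ^ Fintype.card ι * (Fintype.card ι).factorial *
        (H - ∑ i, y i * L (b (some (i, 1)))) := by
  rw [alternatization_tensorForm_of_apply_eq_zero _ (isAlt_normalTwoForm b L)
    (normalTwoForm_some_some b L) (normalTwoForm_characteristicVector b L)
    (characteristicVector_sub_mem_span b L), normalOneForm_characteristicVector]

end NormalForm

section Coordinates

variable (n : ℕ)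

/-- The order in which `wedgeEval` feeds vectors into `β ∧ ω ∧ ⋯ ∧ ω`: position `0` is the slot
`none` of `tensorForm`, position `2 * i + 1 + k` its slot `(i, k)`. -/
def slotPosition : Option (Fin n × Fin 2) ≃ Fin (2 * n + 1) :=
  (optionCongr (finProdFinEquiv.trans (finCongr (mul_comm n 2)))).trans (finSuccEquiv (2 * n)).symm

/-- The coordinate order `(t, x_1, …, x_n, y_1, …, y_n)`: `none` stands for `t`, and, `i` being
counted from `0`, `(i, 0)` and `(i, 1)` stand for `x_{i+1}` and `y_{i+1}`. -/
def coordIndex : Option (Fin n × Fin 2) ≃ Fin (2 * n + 1) :=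
  (optionCongr ((prodComm _ _).trans finProdFinEquiv)).trans (finSuccEquiv (2 * n)).symm

/-- The standard basis of `ℝ^{2n+1}`, indexed through `coordIndex`. -/
noncomputable def coordBasis : Basis (Option (Fin n × Fin 2)) ℝ (Fin (2 * n + 1) → ℝ) :=
  (Pi.basisFun ℝ (Fin (2 * n + 1))).reindex (coordIndex n).symm

variable {n}

theorem slotPosition_none : slotPosition n none = 0 := rfl

theorem slotPosition_some (i : Fin n) (k : Fin 2) :
    slotPosition n (some (i, k)) = ⟨2 * i + k + 1, by omega⟩ := by
  ext
  simp [slotPosition, add_comm]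

theorem coordIndex_none : coordIndex n none = 0 := rfl

theorem coordIndex_some (i : Fin n) (k : Fin 2) :
    coordIndex n (some (i, k)) = ⟨i + n * k + 1, by fin_cases k <;> grind⟩ := by
  ext
  simp [coordIndex]

theorem coordBasis_apply (x : Option (Fin n × Fin 2)) :
    coordBasis n x = Pi.single (coordIndex n x) 1 := by
  simp [coordBasis]

theorem coordBasis_repr (q : Fin (2 * n + 1) → ℝ) (x : Option (Fin n × Fin 2)) :
    (coordBasis n).repr q x = q (coordIndex n x) := by
  simp [coordBasis]

theorem wedgeEval_eq_alternatization {N : ℕ} (β : Dual ℝ (Fin N → ℝ))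
    (ω : LinearMap.BilinForm ℝ (Fin N → ℝ)) (v : Fin (2 * n + 1) → Fin N → ℝ) :
    wedgeEval N n β (fun u => ω u) v =
      1 / 2 ^ n * (tensorForm (Fin n) β ω).alternatization (v ∘ slotPosition n) := by
  rw [wedgeEval, alternatization_tensorForm_apply]
  congr 1
  refine (Fintype.sum_equiv (slotPosition n).permCongr _ _ fun τ => ?_).symm
  have hperm (x : Option (Fin n × Fin 2)) :
      slotPosition n (τ x) = (slotPosition n).permCongr τ (slotPosition n x) := by
    simp
  simp only [Function.comp_apply, hperm, slotPosition_none, slotPosition_some,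
    Perm.sign_permCongr, Units.smul_def, zsmul_eq_mul, mul_assoc]
  rfl

theorem ord12_eq_coordIndex (j : Fin (2 * n + 1)) :
    ord12 n j = coordIndex n ((slotPosition n).symm (finRotate _ j)) := by
  obtain ⟨x, hx⟩ := ((slotPosition n).trans (finRotate _).symm).surjective j
  obtain rfl : j = (finRotate _).symm (slotPosition n x) := hx.symm
  rw [apply_symm_apply, symm_apply_apply]
  rcases x with _ | ⟨i, k⟩
  · have hj : (finRotate (2 * n + 1)).symm (slotPosition n none) = ⟨2 * n, by omega⟩ := by
      rw [symm_apply_eq, finRotate_last', slotPosition_none]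
      rfl
    simp [hj, ord12, coordIndex_none]
  · have hj : (finRotate (2 * n + 1)).symm (slotPosition n (some (i, k))) =
        ⟨2 * i + k, by omega⟩ := by
      rw [symm_apply_eq, finRotate_of_lt (by omega), slotPosition_some]
    rw [hj, coordIndex_some]
    fin_cases k <;> grind [ord12]

theorem wedgeEval_ord12_eq_alternatization_coordBasis (β : Dual ℝ (Fin (2 * n + 1) → ℝ))
    (ω : LinearMap.BilinForm ℝ (Fin (2 * n + 1) → ℝ)) :
    wedgeEval (2 * n + 1) n β (fun u => ω u) (fun j => Pi.single (ord12 n j) 1) =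
      1 / 2 ^ n * (tensorForm (Fin n) β ω).alternatization (coordBasis n) := by
  let rotation : Perm (Option (Fin n × Fin 2)) := (slotPosition n).symm.permCongr (finRotate _)
  have hvectors : (fun j => Pi.single (ord12 n j) 1) ∘ slotPosition n =
      coordBasis n ∘ rotation := by
    funext x
    simp [rotation, ord12_eq_coordIndex, coordBasis_apply]
  have hsign : Perm.sign rotation = 1 := by
    simp [rotation, Perm.sign_permCongr, sign_finRotate]
  rw [wedgeEval_eq_alternatization, hvectors, AlternatingMap.map_perm, hsign, one_smul]

end Coordinates

section ExteriorDerivative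

theorem extD_sum_mul {N : ℕ} {κ : Type*} [Fintype κ] {g : κ → (Fin N → ℝ) → ℝ}
    {q : Fin N → ℝ} (hg : ∀ k, DifferentiableAt ℝ (g k) q) (θ : κ → Dual ℝ (Fin N → ℝ))
    (u v : Fin N → ℝ) :
    extD (fun r w => ∑ k, g k r * θ k w) q u v =
      ∑ k, covectorWedge (fderiv ℝ (g k) q).toLinearMap (θ k) u v := by
  have hfderiv (u v : Fin N → ℝ) : fderiv ℝ (fun r => ∑ k, g k r * θ k v) q u =
      ∑ k, fderiv ℝ (g k) q u * θ k v := by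
    rw [fderiv_fun_sum fun k _ => (hg k).mul_const _]
    simp [fderiv_mul_const (hg _), mul_comm]
  simp [extD, hfderiv, mul_comm]

variable {n : ℕ} {f : (Fin (n + 1) → ℝ) → ℝ} {R : Fin n → (Fin (n + 1) → ℝ) → ℝ}
  {q : Fin (2 * n + 1) → ℝ}

/-- The coefficient `f(t,x) + ∑ i, R_i(t,x) y_i` of `dt` in `alpha12`. -/
noncomputable def dtCoeff (n : ℕ) (f : (Fin (n + 1) → ℝ) → ℝ)
    (R : Fin n → (Fin (n + 1) → ℝ) → ℝ) (q : Fin (2 * n + 1) → ℝ) : ℝ :=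
  f (proj12 n q) + ∑ i, R i (proj12 n q) * (coordBasis n).coord (some (i, 1)) q

theorem alpha12_eq_normalOneForm :
    alpha12 n f R q = normalOneForm (coordBasis n) (dtCoeff n f R q)
      (fun i => (coordBasis n).coord (some (i, 1)) q) := by
  funext v
  simp [alpha12, normalOneForm, dtCoeff, coordBasis_repr, coordIndex_none,
    coordIndex_some, LinearMap.sum_apply, add_comm, add_left_comm, add_assoc]

theorem extD_alpha12 (hH : DifferentiableAt ℝ (dtCoeff n f R) q) :
    extD (alpha12 n f R) q = fun u =>
      ⇑(normalTwoForm (coordBasis n) (fderiv ℝ (dtCoeff n f R) q).toLinearMap u) := by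
  let y (i : Fin n) : (Fin (2 * n + 1) → ℝ) →L[ℝ] ℝ := .proj (coordIndex n (some (i, 1)))
  let coeff (k : Option (Fin n)) : (Fin (2 * n + 1) → ℝ) → ℝ :=
    k.elim (dtCoeff n f R) fun i => ⇑(-y i)
  let θ (k : Option (Fin n)) : Dual ℝ (Fin (2 * n + 1) → ℝ) :=
    (coordBasis n).coord (k.map (·, 0))
  have hcoeff : ∀ k, DifferentiableAt ℝ (coeff k) q
    | none => hH
    | some i => (-y i).differentiableAt
  have hα : alpha12 n f R = fun r w => ∑ k, coeff k r * θ k w := by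
    funext r w
    simp [alpha12_eq_normalOneForm, normalOneForm, coeff, θ, y, Fintype.sum_option,
      LinearMap.sum_apply, sub_eq_add_neg, coordBasis_repr]
  have hfderiv (i : Fin n) : fderiv ℝ (coeff (some i)) q = -y i := (-y i).fderiv
  funext u v
  rw [hα, extD_sum_mul hcoeff, Fintype.sum_option, normalTwoForm_apply]
  simp only [hfderiv]
  simp [coeff, θ, y, coordBasis_repr, neg_add_eq_sub]

theorem proj12_add_smul_y (i : Fin n) (s : ℝ) :
    proj12 n (q + s • coordBasis n (some (i, 1))) = proj12 n q := by
  funext j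
  have hj : Fin.castLE (by omega) j ≠ coordIndex n (some (i, 1)) := by
    rw [coordIndex_some, Ne, Fin.ext_iff, Fin.val_castLE]
    grind
  simp [proj12, coordBasis_apply, hj]

theorem dtCoeff_add_smul_y (i : Fin n) (s : ℝ) :
    dtCoeff n f R (q + s • coordBasis n (some (i, 1))) =
      dtCoeff n f R q + s * R i (proj12 n q) := by
  simp [dtCoeff, proj12_add_smul_y, mul_add, Finset.sum_add_distrib, Finsupp.single_apply,
    add_assoc, mul_comm]

theorem fderiv_dtCoeff_y (hH : DifferentiableAt ℝ (dtCoeff n f R) q) (i : Fin n) :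
    fderiv ℝ (dtCoeff n f R) q (coordBasis n (some (i, 1))) = R i (proj12 n q) := by
  rw [← hH.lineDeriv_eq_fderiv, lineDeriv]
  simp [dtCoeff_add_smul_y]

theorem differentiableAt_dtCoeff (hf : DifferentiableAt ℝ f (proj12 n q))
    (hR : ∀ i, DifferentiableAt ℝ (R i) (proj12 n q)) :
    DifferentiableAt ℝ (dtCoeff n f R) q := by
  have hproj : DifferentiableAt ℝ (proj12 n) q :=
    differentiableAt_pi.2 fun j => differentiableAt_apply _ q
  have hy (i : Fin n) : DifferentiableAt ℝ ((coordBasis n).coord (some (i, 1))) q :=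
    (LinearMap.toContinuousLinearMap ((coordBasis n).coord (some (i, 1)))).differentiableAt
  exact (hf.comp q hproj).add
    (.fun_sum fun i _ => ((hR i).comp q hproj).mul (hy i))

end ExteriorDerivative

theorem alpha_wedge_dalpha_pow_general {n : ℕ} {f : (Fin (n + 1) → ℝ) → ℝ}
    {R : Fin n → (Fin (n + 1) → ℝ) → ℝ} {q : Fin (2 * n + 1) → ℝ}
    (hf : DifferentiableAt ℝ f (proj12 n q)) (hR : ∀ i, DifferentiableAt ℝ (R i) (proj12 n q)) :
    wedgeEval (2 * n + 1) n (alpha12 n f R q) (extD (alpha12 n f R) q)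
      (fun j => Pi.single (ord12 n j) 1) = (n.factorial : ℝ) * f (proj12 n q) := by
  have hH := differentiableAt_dtCoeff hf hR
  rw [extD_alpha12 hH, alpha12_eq_normalOneForm, wedgeEval_ord12_eq_alternatization_coordBasis,
    alternatization_tensorForm_normalForms]
  simp only [ContinuousLinearMap.coe_coe, fderiv_dtCoeff_y hH, Fintype.card_fin]
  have hvalue : dtCoeff n f R q -
      ∑ i, (coordBasis n).coord (some (i, 1)) q * R i (proj12 n q) = f (proj12 n q) := by
    simp [dtCoeff, mul_comm]
  rw [hvalue]
  field_simp

/-- For `α = (f + Σ R_i y_i) dt - Σ y_i dx_i` on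
`W = V × ℝ^n ⊆ ℝ^{2n+1}`, one has `α ∧ (dα)^n = n! · f · dx_1∧dy_1∧⋯∧dx_n∧dy_n∧dt`
at every point of `W`; in particular `α` is contact wherever `f > 0`. -/
theorem alpha_wedge_dalpha_pow (n : ℕ) (hn : 1 ≤ n) (V : Set (Fin (n + 1) → ℝ))
    (hV : IsOpen V) (f : (Fin (n + 1) → ℝ) → ℝ) (R : Fin n → (Fin (n + 1) → ℝ) → ℝ)
    (hf : ContDiffOn ℝ (⊤ : ℕ∞) f V) (hR : ∀ i, ContDiffOn ℝ (⊤ : ℕ∞) (R i) V) :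
    ∀ q : Fin (2 * n + 1) → ℝ, proj12 n q ∈ V →
      wedgeEval (2 * n + 1) n (alpha12 n f R q) (extD (alpha12 n f R) q)
          (fun j => Pi.single (ord12 n j) 1) = (n.factorial : ℝ) * f (proj12 n q) ∧
        (0 < f (proj12 n q) →
          wedgeEval (2 * n + 1) n (alpha12 n f R q) (extD (alpha12 n f R) q)
            (fun j => Pi.single (ord12 n j) 1) ≠ 0) := by
  intro q hq
  have hdiff {g : (Fin (n + 1) → ℝ) → ℝ} (hg : ContDiffOn ℝ (⊤ : ℕ∞) g V) :
      DifferentiableAt ℝ g (proj12 n q) :=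
    (hg.contDiffAt (hV.mem_nhds hq)).differentiableAt (by simp)
  have hwedge := alpha_wedge_dalpha_pow_general (hdiff hf) fun i => hdiff (hR i)
  exact ⟨hwedge, fun hpos => by rw [hwedge]; positivity⟩
end
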